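/- Let λ ∈ ℝ and set N = π·(1 + exp(−8λ²)). Define W(Q,P) = (2/N)·exp(−2P² − 2Q²)·(exp(−8λ²)·cosh(8Qλ) + cos(8Pλ)) and the Wigner negativity δ(W) = ∫∫_{ℝ²} |W(Q,P)| dQ dP − 1. Then δ(W) ≤ tanh(4λ²) ≤ 4λ². In particular, for coupling λ ≪ 1 the non-classicality of the oscillator state produced in the experiment is at most of order 4λ², even when the oscillator begins in its ground state. -/

import Mathlib

/-!
Only the interference term `cos (8Pλ)` of `W` can be negative. Replacing it by `1` gives a majorant
of `|W|` that is a function of `Q` times `exp (-2P²)`. The weight `exp (-8λ²)` exactly cancels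
the gain `exp ((8λ)² / 8)` in `∫ exp (-2Q²) cosh (8λQ) dQ`, so the majorant has total mass
`2 / (1 + exp (-8λ²)) = 1 + tanh (4λ²)`.
-/

open Real MeasureTheory

/-- The ground-state (`ñ = 0`) Wigner function of the oscillator at half a mechanical
period, `W(Q,P) = (2/N) e^{−2P²−2Q²}(e^{−8λ²} cosh(8Qλ) + cos(8Pλ))` with
`N = π(1 + exp(−8λ²))`. -/
noncomputable def groundWigner (l Q P : ℝ) : ℝ :=
  (2 / (π * (1 + Real.exp (-8 * l ^ 2)))) * Real.exp (-2 * P ^ 2 - 2 * Q ^ 2) *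
    (Real.exp (-8 * l ^ 2) * Real.cosh (8 * Q * l) + Real.cos (8 * P * l))

lemma sinh_le_mul_cosh {x : ℝ} (hx : 0 ≤ x) : sinh x ≤ x * cosh x := by
  have cosh_le : ∀ y ∈ interior (Set.Icc 0 x), deriv sinh y ≤ cosh x := by
    intro y hy
    rw [interior_Icc] at hy
    rw [Real.deriv_sinh, cosh_le_cosh, abs_of_pos hy.1, abs_of_nonneg hx]
    exact hy.2.le
  have mean_value := (convex_Icc 0 x).image_sub_le_mul_sub_of_deriv_le
    continuous_sinh.continuousOn differentiable_sinh.differentiableOn cosh_le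
    0 (Set.left_mem_Icc.2 hx) x (Set.right_mem_Icc.2 hx) hx
  simpa [mul_comm] using mean_value

lemma tanh_le_self {x : ℝ} (hx : 0 ≤ x) : tanh x ≤ x := by
  rw [tanh_eq_sinh_div_cosh, div_le_iff₀ (cosh_pos x)]
  exact sinh_le_mul_cosh hx

lemma tanh_eq_two_div_sub_one (x : ℝ) : tanh x = 2 / (1 + exp (-2 * x)) - 1 := by
  have exp_neg_two_mul : exp (-2 * x) = exp (-x) / exp x := by
    rw [← exp_sub]
    ring_nf
  rw [tanh_eq, exp_neg_two_mul]
  field_simp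
  ring

section Gaussian

variable {b : ℝ}

lemma exp_neg_mul_sq_mul_exp_mul (hb : b ≠ 0) (c x : ℝ) :
    exp (-b * x ^ 2) * exp (c * x) =
      exp (c ^ 2 / (4 * b)) * exp (-b * (x - c / (2 * b)) ^ 2) := by
  rw [← exp_add, ← exp_add]
  congr 1
  field_simp
  ring

lemma integrable_exp_neg_mul_sq_mul_exp_mul (hb : 0 < b) (c : ℝ) :
    Integrable fun x : ℝ ↦ exp (-b * x ^ 2) * exp (c * x) := by
  simp_rw [exp_neg_mul_sq_mul_exp_mul hb.ne']
  exact ((integrable_exp_neg_mul_sq hb).comp_sub_right _).const_mul _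

lemma integral_exp_neg_mul_sq_mul_exp_mul (hb : 0 < b) (c : ℝ) :
    ∫ x : ℝ, exp (-b * x ^ 2) * exp (c * x) = exp (c ^ 2 / (4 * b)) * √(π / b) := by
  simp_rw [exp_neg_mul_sq_mul_exp_mul hb.ne', integral_const_mul]
  rw [integral_sub_right_eq_self (fun x : ℝ ↦ exp (-b * x ^ 2)), integral_gaussian]

lemma exp_neg_mul_sq_mul_cosh_mul (b c x : ℝ) :
    exp (-b * x ^ 2) * cosh (c * x) =
      (exp (-b * x ^ 2) * exp (c * x) + exp (-b * x ^ 2) * exp (-c * x)) / 2 := by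
  rw [cosh_eq, neg_mul c]
  ring

lemma integrable_exp_neg_mul_sq_mul_cosh_mul (hb : 0 < b) (c : ℝ) :
    Integrable fun x : ℝ ↦ exp (-b * x ^ 2) * cosh (c * x) := by
  simp_rw [exp_neg_mul_sq_mul_cosh_mul]
  exact ((integrable_exp_neg_mul_sq_mul_exp_mul hb c).add
    (integrable_exp_neg_mul_sq_mul_exp_mul hb (-c))).div_const 2

lemma integral_exp_neg_mul_sq_mul_cosh_mul (hb : 0 < b) (c : ℝ) :
    ∫ x : ℝ, exp (-b * x ^ 2) * cosh (c * x) = exp (c ^ 2 / (4 * b)) * √(π / b) := by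
  simp_rw [exp_neg_mul_sq_mul_cosh_mul]
  rw [integral_div, integral_add (integrable_exp_neg_mul_sq_mul_exp_mul hb c)
    (integrable_exp_neg_mul_sq_mul_exp_mul hb (-c)),
    integral_exp_neg_mul_sq_mul_exp_mul hb, integral_exp_neg_mul_sq_mul_exp_mul hb, neg_sq]
  ring

end Gaussian

lemma integral_integral_norm_le_of_norm_le_mul {α β E : Type*} [MeasurableSpace α]
    [MeasurableSpace β] [NormedAddCommGroup E] {μ : Measure α} {ν : Measure β}
    {F : α → β → E} {f : α → ℝ} {g : β → ℝ} (hf : Integrable f μ) (hg : Integrable g ν)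
    (hF : ∀ᵐ x ∂μ, ∀ᵐ y ∂ν, ‖F x y‖ ≤ f x * g y) :
    ∫ x, ∫ y, ‖F x y‖ ∂ν ∂μ ≤ (∫ x, f x ∂μ) * ∫ y, g y ∂ν := by
  have inner_le : ∀ᵐ x ∂μ, ∫ y, ‖F x y‖ ∂ν ≤ f x * ∫ y, g y ∂ν := by
    filter_upwards [hF] with x hx
    rw [← integral_const_mul]
    exact integral_mono_of_nonneg (.of_forall fun y ↦ norm_nonneg _) (hg.const_mul _) hx
  rw [← integral_mul_const]
  exact integral_mono_of_nonneg (.of_forall fun x ↦ integral_nonneg fun y ↦ norm_nonneg _)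
    (hf.mul_const _) inner_le

/-- The `Q`-dependent factor of the majorant of `|groundWigner l Q P|` obtained by replacing the
interference term `cos (8 * P * l)` by `1`. The constant `2 / N` and the factor `exp (-2 * P ^ 2)`
are left out. -/
noncomputable def groundWignerEnvelope (l Q : ℝ) : ℝ :=
  exp (-8 * l ^ 2) * (exp (-2 * Q ^ 2) * cosh (8 * l * Q)) + exp (-2 * Q ^ 2)

lemma abs_groundWigner_le (l Q P : ℝ) :
    |groundWigner l Q P| ≤
      2 / (π * (1 + exp (-8 * l ^ 2))) * groundWignerEnvelope l Q * exp (-2 * P ^ 2) := by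
  set N := π * (1 + exp (-8 * l ^ 2))
  have abs_add_cos_le : |exp (-8 * l ^ 2) * cosh (8 * Q * l) + cos (8 * P * l)| ≤
      exp (-8 * l ^ 2) * cosh (8 * Q * l) + 1 := by
    refine (abs_add_le _ _).trans (add_le_add (abs_of_pos ?_).le (abs_cos_le_one _))
    exact mul_pos (exp_pos _) (cosh_pos _)
  calc |groundWigner l Q P|
    _ = 2 / N * exp (-2 * P ^ 2 - 2 * Q ^ 2) *
          |exp (-8 * l ^ 2) * cosh (8 * Q * l) + cos (8 * P * l)| := by
      rw [groundWigner, abs_mul, abs_of_nonneg (by positivity)]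
    _ ≤ 2 / N * exp (-2 * P ^ 2 - 2 * Q ^ 2) *
          (exp (-8 * l ^ 2) * cosh (8 * Q * l) + 1) := by
      gcongr
    _ = 2 / N * groundWignerEnvelope l Q * exp (-2 * P ^ 2) := by
      have exp_split : exp (-2 * P ^ 2 - 2 * Q ^ 2) = exp (-2 * P ^ 2) * exp (-2 * Q ^ 2) := by
        rw [← exp_add]
        ring_nf
      rw [groundWignerEnvelope, exp_split, mul_right_comm 8 Q l]
      ring

lemma integrable_groundWignerEnvelope (l : ℝ) : Integrable (groundWignerEnvelope l) :=
  ((integrable_exp_neg_mul_sq_mul_cosh_mul two_pos (8 * l)).const_mul _).add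
    (integrable_exp_neg_mul_sq two_pos)

lemma integral_groundWignerEnvelope (l : ℝ) : ∫ Q, groundWignerEnvelope l Q = 2 * √(π / 2) := by
  have exp_cancel : exp (-8 * l ^ 2) * exp ((8 * l) ^ 2 / (4 * 2)) = 1 := by
    rw [← exp_add, exp_eq_one_iff]
    ring
  simp_rw [groundWignerEnvelope]
  rw [integral_add ((integrable_exp_neg_mul_sq_mul_cosh_mul two_pos _).const_mul _)
      (integrable_exp_neg_mul_sq two_pos), integral_const_mul,
    integral_exp_neg_mul_sq_mul_cosh_mul two_pos, integral_gaussian, ← mul_assoc, exp_cancel]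
  ring

lemma integral_integral_abs_groundWigner_le (l : ℝ) :
    ∫ Q : ℝ, ∫ P : ℝ, |groundWigner l Q P| ≤ 2 / (1 + exp (-8 * l ^ 2)) := by
  set N := π * (1 + exp (-8 * l ^ 2)) with hN
  calc ∫ Q : ℝ, ∫ P : ℝ, |groundWigner l Q P|
    _ ≤ (∫ Q, 2 / N * groundWignerEnvelope l Q) * ∫ P : ℝ, exp (-2 * P ^ 2) :=
      integral_integral_norm_le_of_norm_le_mul (F := groundWigner l)
        ((integrable_groundWignerEnvelope l).const_mul _) (integrable_exp_neg_mul_sq two_pos)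
        (.of_forall fun Q ↦ .of_forall fun P ↦ abs_groundWigner_le l Q P)
    _ = 4 / N * √(π / 2) ^ 2 := by
      rw [integral_const_mul, integral_groundWignerEnvelope, integral_gaussian]
      ring
    _ = 2 / (1 + exp (-8 * l ^ 2)) := by
      rw [sq_sqrt (by positivity), hN]
      field_simp
      norm_num

/-- The Wigner negativity `δ(W) = ∫∫ |W| dQ dP − 1` of the ground-state oscillator at
half a mechanical period is bounded by `tanh(4λ²) ≤ 4λ²`: for small coupling `λ` the
non-classicality is at most of order `4λ²`, even starting from the ground state. -/
theorem wigner_negativity_le (l : ℝ) :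
    (∫ Q : ℝ, ∫ P : ℝ, |groundWigner l Q P|) - 1 ≤ Real.tanh (4 * l ^ 2) ∧
    Real.tanh (4 * l ^ 2) ≤ 4 * l ^ 2 := by
  refine ⟨?_, tanh_le_self (by positivity)⟩
  rw [tanh_eq_two_div_sub_one, show -2 * (4 * l ^ 2) = -8 * l ^ 2 by ring]
  exact sub_le_sub_right (integral_integral_abs_groundWigner_le l) 1
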